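/- Let U : ℝ → [0,∞) be even and measurable with ∫_ℝ x²·U(x) dx < ∞, and let i ≠ j be positive integers. For ℓ > 0 set φ_{(i,j)}^ℓ(x,y) := (√2/ℓ)·( sin(iπx/ℓ)·sin(jπy/ℓ) − sin(jπx/ℓ)·sin(iπy/ℓ) ). Then lim_{ℓ→∞} ℓ³ · ∫_{[0,ℓ]²} U(x−y)·|φ_{(i,j)}^ℓ(x,y)|² dx dy = ( π²·(i²+j²)/2 ) · ∫_ℝ u²·U(u) du. -/

import Mathlib

open MeasureTheory Real Filter

/-- indicator function of the unit interval -/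
noncomputable def chi7 (s : ℝ) : ℝ := (Set.Icc (0:ℝ) 1).indicator (fun _ => 1) s

/-- rescaled unnormalised wave function -/
noncomputable def F7 (a b h s : ℝ) : ℝ :=
  Real.sin (a * (s + h)) * Real.sin (b * s) - Real.sin (b * (s + h)) * Real.sin (a * s)

noncomputable def k7 (a b h s : ℝ) : ℝ := chi7 s * chi7 (s + h) * F7 a b h s ^ 2

lemma chi7_meas : Measurable chi7 := measurable_const.indicator measurableSet_Icc

lemma chi7_nonneg (s : ℝ) : 0 ≤ chi7 s := Set.indicator_nonneg (fun _ _ => zero_le_one) s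

lemma chi7_le (s : ℝ) : chi7 s ≤ 1 := by
  unfold chi7; exact Set.indicator_le' (fun _ _ => le_rfl) (fun _ _ => zero_le_one) s

lemma chi7_int : Integrable chi7 := by
  unfold chi7
  exact (integrable_indicator_iff measurableSet_Icc).2 (by simp)

lemma chi7_integral : ∫ s, chi7 s = 1 := by
  unfold chi7
  rw [integral_indicator measurableSet_Icc]; simp

lemma k7_meas (a b : ℝ) : Measurable (fun p : ℝ × ℝ => k7 a b p.1 p.2) := by
  have := chi7_meas
  unfold k7 F7
  fun_prop

lemma F7_bound (a b h s : ℝ) : |F7 a b h s| ≤ (|a| + |b|) * |h| := by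
  have e : F7 a b h s = (Real.sin (a * (s + h)) - Real.sin (a * s)) * Real.sin (b * s)
      - (Real.sin (b * (s + h)) - Real.sin (b * s)) * Real.sin (a * s) := by
    unfold F7; ring
  have key : ∀ c d : ℝ, |(Real.sin (c * (s + h)) - Real.sin (c * s)) * Real.sin (d * s)|
      ≤ |c| * |h| := by
    intro c d
    rw [abs_mul, ← abs_mul c h]
    have h1 := abs_sin_sub_sin_le (c * (s + h)) (c * s)
    have h2 : c * (s + h) - c * s = c * h := by ring
    rw [h2] at h1
    have h3 := Real.abs_sin_le_one (d * s)
    calc _ ≤ |c * h| * 1 := by gcongr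
      _ = _ := mul_one _
  rw [e]
  have := abs_sub ((Real.sin (a * (s + h)) - Real.sin (a * s)) * Real.sin (b * s))
    ((Real.sin (b * (s + h)) - Real.sin (b * s)) * Real.sin (a * s))
  have h1 := key a b
  have h2 := key b a
  linarith

lemma k7_nonneg (a b h s : ℝ) : 0 ≤ k7 a b h s := by
  unfold k7
  have := chi7_nonneg s
  have := chi7_nonneg (s + h)
  positivity

lemma k7_le (a b h s : ℝ) : k7 a b h s ≤ ((|a| + |b|) ^ 2 * h ^ 2) * chi7 s := by
  unfold k7
  have h1 := chi7_nonneg s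
  have h2 := chi7_nonneg (s + h)
  have h3 := chi7_le (s + h)
  have h4 : F7 a b h s ^ 2 ≤ (|a| + |b|) ^ 2 * h ^ 2 := by
    rw [← sq_abs (F7 a b h s), ← sq_abs h, ← mul_pow]
    exact pow_le_pow_left₀ (abs_nonneg _) (F7_bound a b h s) 2
  calc _ ≤ chi7 s * 1 * ((|a| + |b|) ^ 2 * h ^ 2) := by gcongr
    _ = _ := by ring

lemma k7_int_nonneg (a b h : ℝ) : 0 ≤ ∫ s, k7 a b h s := integral_nonneg (k7_nonneg a b h)

lemma k7_int_le (a b h : ℝ) : ∫ s, k7 a b h s ≤ (|a| + |b|) ^ 2 * h ^ 2 := by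
  have := integral_mono_of_nonneg (μ := volume) (ae_of_all _ (k7_nonneg a b h))
    (chi7_int.const_mul ((|a| + |b|) ^ 2 * h ^ 2)) (ae_of_all _ (k7_le a b h))
  rwa [integral_const_mul, chi7_integral, mul_one] at this

lemma F7_lim (a b s : ℝ) : Tendsto (fun h => F7 a b h s / h) (nhdsWithin 0 {0}ᶜ)
    (nhds (a * Real.cos (a * s) * Real.sin (b * s) - b * Real.cos (b * s) * Real.sin (a * s))) := by
  have hs : ∀ c : ℝ, HasDerivAt (fun h => Real.sin (c * (s + h))) (c * Real.cos (c * s)) 0 := by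
    intro c
    have h1 : HasDerivAt (fun h : ℝ => c * (s + h)) c 0 := by
      simpa using ((hasDerivAt_id (0:ℝ)).const_add s).const_mul c
    have := h1.sin
    simpa [mul_comm] using this
  have hd : HasDerivAt (fun h => F7 a b h s)
      (a * Real.cos (a * s) * Real.sin (b * s) - b * Real.cos (b * s) * Real.sin (a * s)) 0 :=
    ((hs a).mul_const _).sub ((hs b).mul_const _)
  have := hd.tendsto_slope
  refine this.congr fun h => ?_
  have : F7 a b 0 s = 0 := by unfold F7; simp; ring
  rw [slope_def_field, this]; simp

lemma cos7 (n : ℤ) (hn : n ≠ 0) : ∫ s in (0:ℝ)..1, Real.cos (2 * π * n * s) = 0 := by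
  have hc : (2 * π * n : ℝ) ≠ 0 := by positivity
  rw [intervalIntegral.integral_comp_mul_left (fun x => Real.cos x) hc]
  simp
  right
  have := Real.sin_int_mul_pi (2 * n)
  push_cast at this
  rw [← this]; congr 1; ring

lemma W7 (i j : ℕ) (hi : 1 ≤ i) (hj : 1 ≤ j) (hij : i ≠ j) :
    ∫ s, chi7 s * ((i * π) * Real.cos ((i * π) * s) * Real.sin ((j * π) * s)
      - (j * π) * Real.cos ((j * π) * s) * Real.sin ((i * π) * s)) ^ 2
      = π ^ 2 * ((i:ℝ) ^ 2 + (j:ℝ) ^ 2) / 4 := by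
  have e0 : ∀ g : ℝ → ℝ, ∫ s, chi7 s * g s = ∫ s in (0:ℝ)..1, g s := by
    intro g
    rw [intervalIntegral.integral_of_le zero_le_one, ← integral_Icc_eq_integral_Ioc,
      ← integral_indicator measurableSet_Icc]
    congr 1; ext s; unfold chi7; by_cases h : s ∈ Set.Icc (0:ℝ) 1 <;> simp [h]
  rw [e0]
  have e1 : ∀ s : ℝ, ((i * π) * Real.cos ((i * π) * s) * Real.sin ((j * π) * s)
      - (j * π) * Real.cos ((j * π) * s) * Real.sin ((i * π) * s)) ^ 2
      = π ^ 2 * ((i:ℝ) ^ 2 + (j:ℝ) ^ 2) / 4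
        - π ^ 2 * (i - j) ^ 2 / 8 * Real.cos (2 * π * ((i + j : ℤ) : ℝ) * s)
        - π ^ 2 * (i + j) ^ 2 / 8 * Real.cos (2 * π * ((i - j : ℤ) : ℝ) * s)
        - π ^ 2 * (i - j) * (i + j) / 4 * Real.cos (2 * π * ((j : ℤ) : ℝ) * s)
        + π ^ 2 * (i - j) * (i + j) / 4 * Real.cos (2 * π * ((i : ℤ) : ℝ) * s) := by
    intro s
    have a1 : 2 * π * ((i + j : ℤ) : ℝ) * s = 2 * (i * π * s) + 2 * (j * π * s) := by
      push_cast; ring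
    have a2 : 2 * π * ((i - j : ℤ) : ℝ) * s = 2 * (i * π * s) - 2 * (j * π * s) := by
      push_cast; ring
    have a3 : 2 * π * ((j : ℤ) : ℝ) * s = 2 * (j * π * s) := by
      push_cast; ring
    have a4 : 2 * π * ((i : ℤ) : ℝ) * s = 2 * (i * π * s) := by
      push_cast; ring
    rw [a1, a2, a3, a4, Real.cos_add, Real.cos_sub, Real.cos_two_mul, Real.cos_two_mul,
      Real.sin_two_mul, Real.sin_two_mul]
    have h1 := Real.sin_sq (i * π * s)
    have h2 := Real.sin_sq (j * π * s)
    generalize Real.sin (i * π * s) = x at *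
    generalize Real.sin (j * π * s) = y at *
    generalize Real.cos (i * π * s) = z at *
    generalize Real.cos (j * π * s) = w at *
    ring_nf
    rw [h1, h2]
    ring
  simp_rw [e1]
  have ii : ∀ (c d : ℝ), IntervalIntegrable (fun s => c * Real.cos (d * s)) volume 0 1 :=
    fun c d => Continuous.intervalIntegrable (by fun_prop) _ _
  have ic : ∀ c : ℝ, IntervalIntegrable (fun _ => c) volume (0:ℝ) 1 :=
    fun c => Continuous.intervalIntegrable (by fun_prop) _ _
  rw [intervalIntegral.integral_add ((((ic _).sub (ii _ _)).sub (ii _ _)).sub (ii _ _)) (ii _ _),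
    intervalIntegral.integral_sub (((ic _).sub (ii _ _)).sub (ii _ _)) (ii _ _),
    intervalIntegral.integral_sub ((ic _).sub (ii _ _)) (ii _ _),
    intervalIntegral.integral_sub (ic _) (ii _ _)]
  simp only [intervalIntegral.integral_const_mul]
  rw [cos7 _ (by omega), cos7 _ (by omega), cos7 _ (by omega), cos7 _ (by omega)]
  simp

lemma k7_lim (a b : ℝ) : Tendsto (fun h => (∫ s, k7 a b h s) / h ^ 2) (nhdsWithin 0 {0}ᶜ)
    (nhds (∫ s, chi7 s * (a * Real.cos (a * s) * Real.sin (b * s)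
      - b * Real.cos (b * s) * Real.sin (a * s)) ^ 2)) := by
  simp_rw [← integral_div]
  refine tendsto_integral_filter_of_dominated_convergence
    (fun s => (|a| + |b|) ^ 2 * chi7 s) ?_ ?_ (chi7_int.const_mul _) ?_
  · refine Eventually.of_forall fun h => ?_
    exact (((k7_meas a b).comp (measurable_const.prodMk measurable_id)).div_const _).aestronglyMeasurable
  · refine eventually_nhdsWithin_of_forall fun h hh => ae_of_all _ fun s => ?_
    have hh' : h ≠ 0 := hh
    rw [Real.norm_of_nonneg (div_nonneg (k7_nonneg _ _ _ _) (sq_nonneg h)),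
      div_le_iff₀ (by positivity)]
    linarith [k7_le a b h s]
  · have n0 : ∀ᵐ s : ℝ, s ≠ 0 := by simp [ae_iff, measure_singleton]
    have n1 : ∀ᵐ s : ℝ, s ≠ 1 := by simp [ae_iff, measure_singleton]
    filter_upwards [n0, n1] with s h0 h1
    by_cases hs : s ∈ Set.Icc (0:ℝ) 1
    · have hs' : s ∈ Set.Ioo (0:ℝ) 1 :=
        ⟨lt_of_le_of_ne hs.1 h0.symm, lt_of_le_of_ne hs.2 h1⟩
      have hev : ∀ᶠ h in nhdsWithin (0:ℝ) {0}ᶜ, s + h ∈ Set.Icc (0:ℝ) 1 := by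
        have : Tendsto (fun h : ℝ => s + h) (nhdsWithin 0 {0}ᶜ) (nhds s) := by
          have : Tendsto (fun h : ℝ => s + h) (nhds 0) (nhds (s + 0)) :=
            (continuous_const.add continuous_id).tendsto 0
          rw [add_zero] at this
          exact this.mono_left nhdsWithin_le_nhds
        exact this (Icc_mem_nhds hs'.1 hs'.2)
      refine (((F7_lim a b s).pow 2).const_mul (chi7 s)).congr' ?_
      filter_upwards [hev] with h hh
      have : chi7 (s + h) = 1 := by unfold chi7; simp only [Set.indicator_of_mem hh]
      unfold k7; rw [this]; ring
    · have : chi7 s = 0 := by unfold chi7; simp only [Set.indicator_of_notMem hs]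
      simp [k7, this]

lemma main7 (U : ℝ → ℝ) (hUmeas : Measurable U) (hUnonneg : ∀ x, 0 ≤ U x)
    (hU2 : Integrable (fun x => x ^ 2 * U x)) (a b ℓ : ℝ) (hℓ : 0 < ℓ) :
    ℓ ^ 3 * ∫ q in (Set.Icc (0:ℝ) ℓ ×ˢ Set.Icc (0:ℝ) ℓ),
          U (q.1 - q.2) *
            (Real.sqrt 2 / ℓ *
              (Real.sin (a * q.1 / ℓ) * Real.sin (b * q.2 / ℓ)
                - Real.sin (b * q.1 / ℓ) * Real.sin (a * q.2 / ℓ))) ^ 2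
      = ∫ u, U u * (2 * ℓ ^ 2 * ∫ s, k7 a b (u / ℓ) s) := by
  have hχ : ∀ x, chi7 (x / ℓ) = (Set.Icc (0:ℝ) ℓ).indicator (fun _ => 1) x := by
    intro x
    have : x / ℓ ∈ Set.Icc (0:ℝ) 1 ↔ x ∈ Set.Icc (0:ℝ) ℓ := by
      simp only [Set.mem_Icc, div_le_one hℓ, le_div_iff₀ hℓ, zero_mul]
    unfold chi7
    by_cases h : x ∈ Set.Icc (0:ℝ) ℓ
    · rw [Set.indicator_of_mem h, Set.indicator_of_mem (this.2 h)]
    · rw [Set.indicator_of_notMem h, Set.indicator_of_notMem (mt this.1 h)]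
  set G : ℝ × ℝ → ℝ := fun p => U p.1 * (2 / ℓ ^ 2 * k7 a b (p.1 / ℓ) (p.2 / ℓ)) with hG
  have hk : Measurable (fun p : ℝ × ℝ => k7 a b (p.1 / ℓ) (p.2 / ℓ)) :=
    (k7_meas a b).comp (by fun_prop : Measurable fun p : ℝ × ℝ => (p.1 / ℓ, p.2 / ℓ))
  have hGm : Measurable G := by
    rw [hG]; fun_prop
  have hGi : Integrable G (volume.prod volume) := by
    have hb : Integrable (fun p : ℝ × ℝ => (p.1 ^ 2 * U p.1) *
        ((2 / ℓ ^ 2 * ((|a| + |b|) ^ 2 / ℓ ^ 2)) * chi7 (p.2 / ℓ))) (volume.prod volume) :=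
      hU2.mul_prod ((chi7_int.comp_div hℓ.ne').const_mul _)
    refine hb.mono' hGm.aestronglyMeasurable (ae_of_all _ fun p => ?_)
    have h1 := k7_nonneg a b (p.1 / ℓ) (p.2 / ℓ)
    have h2 := k7_le a b (p.1 / ℓ) (p.2 / ℓ)
    have h3 := hUnonneg p.1
    rw [Real.norm_of_nonneg (by rw [hG]; positivity)]
    calc G p ≤ U p.1 * (2 / ℓ ^ 2 * (((|a| + |b|) ^ 2 * (p.1 / ℓ) ^ 2) * chi7 (p.2 / ℓ))) := by
          rw [hG]; dsimp only; gcongr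
      _ = _ := by field_simp
  have s1 : ∫ q in (Set.Icc (0:ℝ) ℓ ×ˢ Set.Icc (0:ℝ) ℓ),
          U (q.1 - q.2) *
            (Real.sqrt 2 / ℓ *
              (Real.sin (a * q.1 / ℓ) * Real.sin (b * q.2 / ℓ)
                - Real.sin (b * q.1 / ℓ) * Real.sin (a * q.2 / ℓ))) ^ 2
      = ∫ q : ℝ × ℝ, G (q.1 - q.2, q.2) := by
    rw [← integral_indicator (measurableSet_Icc.prod measurableSet_Icc)]
    congr 1; ext q
    have e1 : q.2 / ℓ + (q.1 - q.2) / ℓ = q.1 / ℓ := by ring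
    rw [hG]; dsimp only
    unfold k7 F7
    rw [e1, hχ, hχ]
    have h2 : Real.sqrt 2 ^ 2 = 2 := Real.sq_sqrt (by norm_num)
    by_cases m1 : q.1 ∈ Set.Icc (0:ℝ) ℓ
    · by_cases m2 : q.2 ∈ Set.Icc (0:ℝ) ℓ
      · rw [Set.indicator_of_mem (Set.mk_mem_prod m1 m2), Set.indicator_of_mem m1,
          Set.indicator_of_mem m2, mul_pow, div_pow, h2]
        simp only [mul_div_assoc]
        ring
      · rw [Set.indicator_of_notMem (fun h => m2 h.2), Set.indicator_of_notMem m2]; ring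
    · rw [Set.indicator_of_notMem (fun h => m1 h.1), Set.indicator_of_notMem m1]; ring
  have s2 : ∫ q : ℝ × ℝ, G (q.1 - q.2, q.2) = ∫ p, G p ∂(volume.prod volume) := by
    have hT := measurePreserving_sub_prod (volume : Measure ℝ) (volume : Measure ℝ)
    conv_rhs => rw [← hT.map_eq]
    rw [integral_map hT.measurable.aemeasurable hGm.aestronglyMeasurable]
    rfl
  rw [s1, s2, integral_prod _ hGi, ← integral_const_mul]
  congr 1; ext u
  rw [hG]; dsimp only
  rw [integral_const_mul, integral_const_mul, Measure.integral_comp_div (fun s => k7 a b (u / ℓ) s),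
    abs_of_pos hℓ, smul_eq_mul]
  field_simp



/-- The interaction amplitude of two fermions occupying the `i`-th and
`j`-th Dirichlet levels of `[0,ℓ]` satisfies
`ℓ³·∫∫ U(x−y)|φ_{(i,j)}^ℓ(x,y)|² dx dy → (π²(i²+j²)/2)·∫ u²U(u) du` as `ℓ → ∞`. -/
theorem stmt7
    (U : ℝ → ℝ) (hUmeas : Measurable U) (hUnonneg : ∀ x, 0 ≤ U x)
    (hUeven : ∀ x, U (-x) = U x)
    (hU2 : Integrable (fun x => x ^ 2 * U x))
    (i j : ℕ) (hi : 1 ≤ i) (hj : 1 ≤ j) (hij : i ≠ j) :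
    Tendsto (fun ℓ : ℝ => ℓ ^ 3 *
        ∫ q in (Set.Icc (0:ℝ) ℓ ×ˢ Set.Icc (0:ℝ) ℓ),
          U (q.1 - q.2) *
            (Real.sqrt 2 / ℓ *
              (Real.sin ((i : ℝ) * π * q.1 / ℓ) * Real.sin ((j : ℝ) * π * q.2 / ℓ)
                - Real.sin ((j : ℝ) * π * q.1 / ℓ) * Real.sin ((i : ℝ) * π * q.2 / ℓ))) ^ 2)
      atTop
      (nhds ((π ^ 2 * ((i : ℝ) ^ 2 + (j : ℝ) ^ 2) / 2) * ∫ u : ℝ, u ^ 2 * U u)) := by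
  set a : ℝ := i * π with ha
  set b : ℝ := j * π with hb
  have hev : (fun ℓ : ℝ => ∫ u, U u * (2 * ℓ ^ 2 * ∫ s, k7 a b (u / ℓ) s)) =ᶠ[atTop] _ :=
    (eventually_gt_atTop (0:ℝ)).mono fun ℓ hℓ =>
      (main7 U hUmeas hUnonneg hU2 a b ℓ hℓ).symm
  refine Tendsto.congr' hev ?_
  rw [← integral_const_mul]
  refine tendsto_integral_filter_of_dominated_convergence
    (fun u => (2 * (|a| + |b|) ^ 2) * (u ^ 2 * U u)) ?_ ?_ (hU2.const_mul _) ?_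
  · refine Eventually.of_forall fun ℓ => ?_
    have h1 : StronglyMeasurable (fun h => ∫ s, k7 a b h s) :=
      StronglyMeasurable.integral_prod_right' (f := fun p : ℝ × ℝ => k7 a b p.1 p.2)
        (k7_meas a b).stronglyMeasurable
    have h2 : Measurable (fun u : ℝ => ∫ s, k7 a b (u / ℓ) s) :=
      h1.measurable.comp (by fun_prop : Measurable fun u : ℝ => u / ℓ)
    exact (hUmeas.mul (h2.const_mul _)).aestronglyMeasurable
  · filter_upwards [eventually_gt_atTop (0:ℝ)] with ℓ hℓ
    refine ae_of_all _ fun u => ?_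
    have h1 := k7_int_nonneg a b (u / ℓ)
    have h2 := k7_int_le a b (u / ℓ)
    have h3 := hUnonneg u
    rw [Real.norm_of_nonneg (by positivity)]
    calc _ ≤ U u * (2 * ℓ ^ 2 * ((|a| + |b|) ^ 2 * (u / ℓ) ^ 2)) := by gcongr
      _ = _ := by field_simp
  · have n0 : ∀ᵐ s : ℝ, s ≠ 0 := by simp [ae_iff, measure_singleton]
    filter_upwards [n0] with u hu
    have hl := k7_lim a b
    rw [ha, hb, W7 i j hi hj hij, ← ha, ← hb] at hl
    have ht : Tendsto (fun ℓ : ℝ => u / ℓ) atTop (nhdsWithin 0 {0}ᶜ) := by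
      refine tendsto_nhdsWithin_iff.2 ⟨tendsto_const_nhds.div_atTop tendsto_id, ?_⟩
      filter_upwards [eventually_gt_atTop (0:ℝ)] with ℓ hℓ
      exact div_ne_zero hu hℓ.ne'
    have := (hl.comp ht).const_mul (2 * u ^ 2 * U u)
    have e : π ^ 2 * ((i:ℝ) ^ 2 + (j:ℝ) ^ 2) / 2 * (u ^ 2 * U u)
      = 2 * u ^ 2 * U u * (π ^ 2 * ((i:ℝ) ^ 2 + (j:ℝ) ^ 2) / 4) := by ring
    rw [e]
    refine this.congr' ?_
    filter_upwards [eventually_gt_atTop (0:ℝ)] with ℓ hℓ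
    simp only [Function.comp]
    field_simp
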